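/- Summation of a power times a monomial against a cyclotomic S-sum: let k ∈ ℕ, n ∈ ℕ, m ≥ 1, let a_1,…,a_m, c_1,…,c_m be positive integers, b_1,…,b_m nonnegative integers, and x, x_1,…,x_m nonzero reals. Then Σ_{i=1}^n x^i i^k · S_{(a_1,b_1,c_1),…,(a_m,b_m,c_m)}(x_1,…,x_m; i) = S_{(a_1,b_1,c_1),…,(a_m,b_m,c_m)}(x_1,…,x_m; n) · Σ_{i=1}^n x^i i^k − Σ_{j=1}^n ( x_1^j · S_{(a_2,b_2,c_2),…,(a_m,b_m,c_m)}(x_2,…,x_m; j) / (a_1 j + b_1)^{c_1} ) · Σ_{i=1}^{j−1} x^i i^k. -/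

import Mathlib

/-- Cyclotomic S-sums: `cycS [((a₁,b₁,c₁),x₁),…] n` is
`S_{(a₁,b₁,c₁),…}(x₁,…; n)`. The empty sum equals `1`. -/
noncomputable def cycS : List ((ℕ × ℤ × ℕ) × ℝ) → ℕ → ℝ
  | [], _ => 1
  | ((a, b, c), x) :: t, n =>
      ∑ i ∈ Finset.Icc 1 n, x ^ i / ((a : ℝ) * i + (b : ℝ)) ^ c * cycS t i

/-! Expanding the outermost sum of `S(i)` and multiplying out, both `∑ᵢ f i * S(i)` and
`S(n) * ∑ᵢ f i` become sums over pairs `(i, j)` in `{1, …, n}²`: the former over the pairs with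
`j ≤ i`, the latter over all pairs. Their difference is the sum over the pairs with `i < j`. -/

open Finset

theorem sum_mul_sum_filter_le_add_sum_filter_lt_mul {ι R : Type*} [LinearOrder ι]
    [NonUnitalNonAssocSemiring R] (s : Finset ι) (f g : ι → R) :
    ∑ i ∈ s, f i * ∑ j ∈ s with j ≤ i, g j + ∑ j ∈ s, (∑ i ∈ s with i < j, f i) * g j =
      (∑ i ∈ s, f i) * ∑ j ∈ s, g j := by
  have swap : ∑ j ∈ s, (∑ i ∈ s with i < j, f i) * g j =
      ∑ i ∈ s, f i * ∑ j ∈ s with i < j, g j := by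
    simp only [sum_mul, mul_sum]
    exact sum_comm' fun i j ↦ by simp only [mem_filter]; tauto
  have split (i : ι) : ∑ j ∈ s with j ≤ i, g j + ∑ j ∈ s with i < j, g j = ∑ j ∈ s, g j := by
    simpa only [not_le] using sum_filter_add_sum_filter_not s (· ≤ i) g
  rw [swap, ← sum_add_distrib, sum_mul]
  exact sum_congr rfl fun i _ ↦ by rw [← mul_add, split]

theorem sum_Icc_one_mul_sum_Icc_one {R : Type*} [NonUnitalNonAssocRing R] (f g : ℕ → R) (n : ℕ) :
    ∑ i ∈ Icc 1 n, f i * ∑ j ∈ Icc 1 i, g j =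
      (∑ i ∈ Icc 1 n, f i) * ∑ j ∈ Icc 1 n, g j -
        ∑ j ∈ Icc 1 n, (∑ i ∈ Icc 1 (j - 1), f i) * g j := by
  have filter_le {i : ℕ} (hi : i ∈ Icc 1 n) : {j ∈ Icc 1 n | j ≤ i} = Icc 1 i := by
    ext j; simp only [mem_filter, mem_Icc] at hi ⊢; omega
  have filter_lt {j : ℕ} (hj : j ∈ Icc 1 n) : {i ∈ Icc 1 n | i < j} = Icc 1 (j - 1) := by
    ext i; simp only [mem_filter, mem_Icc] at hj ⊢; omega
  rw [eq_sub_iff_add_eq, ← sum_mul_sum_filter_le_add_sum_filter_lt_mul]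
  congr 1
  · exact sum_congr rfl fun i hi ↦ by rw [filter_le hi]
  · exact sum_congr rfl fun j hj ↦ by rw [filter_lt hj]

theorem cycS_cons (a c : ℕ) (b : ℤ) (y : ℝ) (t : List ((ℕ × ℤ × ℕ) × ℝ)) (n : ℕ) :
    cycS (((a, b, c), y) :: t) n =
      ∑ j ∈ Icc 1 n, y ^ j * cycS t j / ((a : ℝ) * j + (b : ℝ)) ^ c := by
  simp only [cycS, mul_div_right_comm]

theorem cycS_sum_power_monomial_general (n a c : ℕ) (b : ℤ) (y : ℝ)
    (t : List ((ℕ × ℤ × ℕ) × ℝ)) (f : ℕ → ℝ)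
    (_hden : ∀ p ∈ ((a, b, c), y) :: t, 0 < (p.1.1 : ℤ) + p.1.2.1) :
    ∑ i ∈ Icc 1 n, f i * cycS (((a, b, c), y) :: t) i =
      cycS (((a, b, c), y) :: t) n * ∑ i ∈ Icc 1 n, f i -
        ∑ j ∈ Icc 1 n,
          y ^ j * cycS t j / ((a : ℝ) * j + (b : ℝ)) ^ c * ∑ i ∈ Icc 1 (j - 1), f i := by
  simp only [cycS_cons, sum_Icc_one_mul_sum_Icc_one, mul_comm]

/-- Summation of `x^i i^k` against a cyclotomic S-sum of depth `≥ 1`. -/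
theorem cycS_sum_power_monomial (k n : ℕ) (a₁ c₁ b₁ : ℕ) (x x₁ : ℝ)
    (t : List ((ℕ × ℤ × ℕ) × ℝ))
    (ha₁ : 0 < a₁) (hc₁ : 0 < c₁) (hx : x ≠ 0) (hx₁ : x₁ ≠ 0)
    (ht : ∀ p ∈ t, 0 < p.1.1 ∧ 0 ≤ p.1.2.1 ∧ 0 < p.1.2.2 ∧ p.2 ≠ 0) :
    ∑ i ∈ Finset.Icc 1 n,
        x ^ i * (i : ℝ) ^ k * cycS (((a₁, (b₁ : ℤ), c₁), x₁) :: t) i =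
      cycS (((a₁, (b₁ : ℤ), c₁), x₁) :: t) n *
          (∑ i ∈ Finset.Icc 1 n, x ^ i * (i : ℝ) ^ k)
        - ∑ j ∈ Finset.Icc 1 n,
            x₁ ^ j * cycS t j / ((a₁ : ℝ) * j + (b₁ : ℝ)) ^ c₁ *
              ∑ i ∈ Finset.Icc 1 (j - 1), x ^ i * (i : ℝ) ^ k := by
  have hden : ∀ p ∈ ((a₁, (b₁ : ℤ), c₁), x₁) :: t, 0 < (p.1.1 : ℤ) + p.1.2.1 :=
    List.forall_mem_cons.2 ⟨by dsimp only; omega, fun p hp ↦ by have := ht p hp; omega⟩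
  simpa only [Int.cast_natCast] using
    cycS_sum_power_monomial_general n a₁ c₁ b₁ x₁ t (fun i ↦ x ^ i * (i : ℝ) ^ k) hden
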